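/- There exists a class of languages learnable by a strongly monotone behaviorally correct full-information learner from informants but not by any dual strongly monotone one: [Inf G SMon Bc] \ [Inf G SMon^d Bc] ≠ ∅; in fact the class of all finite languages witnesses this separation. -/

import Mathlib

open Filter Classical

namespace InfBc

/-! ### Basic notions: r.e. sets, informants, learners -/

/-- The `e`-th recursively enumerable set (via an acceptable numbering of
partial computable functions, `W e = dom φ_e`). -/
def W (e : ℕ) : Set ℕ := {x | ((Denumerable.ofNat Nat.Partrec.Code e).eval x).Dom}

/-- A language is recursively enumerable. -/
def RE (L : Set ℕ) : Prop := ∃ e, W e = L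

abbrev Datum := ℕ × Bool
abbrev Seq := List Datum
abbrev Informant := ℕ → Datum
abbrev HypSeq := ℕ → Part ℕ
/-- Learners are partial functions; all input types are coded into `ℕ`. -/
abbrev Learner := ℕ →. ℕ
abbrev Restriction := HypSeq → Informant → Prop

/-- Positive information of an infinite sequence. -/
def posI (I : Informant) : Set ℕ := {x | ∃ n, I n = (x, true)}
/-- Negative information of an infinite sequence. -/
def negI (I : Informant) : Set ℕ := {x | ∃ n, I n = (x, false)}

/-- `I` is an informant for the language `L`. -/
def IsInformant (I : Informant) (L : Set ℕ) : Prop := posI I = L ∧ negI I = Lᶜ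

/-- `I` is an informant (for some language), i.e. `I ∈ Inf`. -/
def IsInf (I : Informant) : Prop := IsInformant I (posI I)

/-- `I` is a canonical informant. -/
def Canonical (I : Informant) : Prop := ∀ x, I x = (x, true) ∨ I x = (x, false)

/-- `I[n]`, the length-`n` initial segment of `I`. -/
def segment (I : Informant) (n : ℕ) : Seq := (List.range n).map I

/-- Positive information of a finite sequence. -/
def posS (σ : Seq) : Set ℕ := {x | (x, true) ∈ σ}
/-- Negative information of a finite sequence. -/
def negS (σ : Seq) : Set ℕ := {x | (x, false) ∈ σ}
/-- The content of a finite sequence, as a set. -/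
def contentS (σ : Seq) : Set Datum := {a | a ∈ σ}

/-! ### Interaction operators -/

abbrev InteractionOperator := Learner → Informant → HypSeq

/-- Full-information (Gold-style) interaction: `G(h,I)(i) = h(I[i])`. -/
def Gop : InteractionOperator := fun h I i => h (Encodable.encode (segment I i))

/-- Set-driven interaction: `Sd(h,I)(i) = h(content(I[i]))`. -/
def Sdop : InteractionOperator := fun h I i => h (Encodable.encode (segment I i).toFinset)

/-- The iterated evaluation of an iterative learner on a finite sequence:
start with the initial hypothesis `h(none)` and feed the data one by one. -/
def iterExtend (h : Learner) (σ : Seq) : Part ℕ :=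
  σ.foldl (fun pe a => pe.bind fun e => h (Encodable.encode (some (e, a))))
    (h (Encodable.encode (none : Option (ℕ × Datum))))

/-- Iterative interaction: `It(h,I)(i)` is obtained by feeding `I[i]` one datum
at a time, each time updating the previous hypothesis. -/
def Itop : InteractionOperator := fun h I i => iterExtend h (segment I i)

/-- An iterative learner is confluent if the order and multiplicity in which
the content is presented does not matter. -/
def ConfluentLearner (h : Learner) : Prop :=
  ∀ σ τ : Seq, contentS σ = contentS τ → iterExtend h σ = iterExtend h τ

/-- Confluently iterative interaction. -/
noncomputable def CflItop : InteractionOperator := fun h I i =>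
  if ConfluentLearner h then iterExtend h (segment I i) else Part.none

/-- `β ≼ β'`: every (partial computable) `β`-learner can be translated into a
`β'`-learner with the same hypothesis sequence on every informant. -/
def OpLe (β β' : InteractionOperator) : Prop :=
  ∀ h : Learner, Partrec h → ∃ h' : Learner, Partrec h' ∧
    ∀ I : Informant, IsInf I → ∀ n, β h I n = β' h' I n

/-! ### Learning restrictions -/

/-- The trivial restriction `T`. -/
def TT : Restriction := fun _ _ => True

/-- Explanatory identification. -/
def Ex : Restriction := fun p I =>
  ∃ q, W q = posI I ∧ ∀ᶠ n in atTop, p n = Part.some q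

/-- Behaviorally correct identification. -/
def Bc : Restriction := fun p I => ∀ᶠ n in atTop, ∃ e ∈ p n, W e = posI I

/-- Consistency of a hypothesis with a finite sequence of data. -/
def ConsH (e : ℕ) (σ : Seq) : Prop := posS σ ⊆ W e ∧ negS σ ∩ W e = ∅

/-- Consistency of a hypothesis sequence with an informant. -/
def Cons : Restriction := fun p I => ∀ n, ∃ e ∈ p n, ConsH e (segment I n)

/-- Strongly monotone. -/
def SMon : Restriction := fun p _ =>
  ∀ s t, s ≤ t → ∀ e ∈ p s, ∀ e' ∈ p t, W e ⊆ W e'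

/-- Dual strongly monotone. -/
def SMond : Restriction := fun p _ =>
  ∀ s t, s ≤ t → ∀ e ∈ p s, ∀ e' ∈ p t, W e' ⊆ W e

/-- Monotone. -/
def Mon : Restriction := fun p I =>
  ∀ s t, s ≤ t → ∀ e ∈ p s, ∀ e' ∈ p t, W e ∩ posI I ⊆ W e' ∩ posI I

/-- Dual monotone. -/
def Mond : Restriction := fun p I =>
  ∀ s t, s ≤ t → ∀ e ∈ p s, ∀ e' ∈ p t, (W e)ᶜ ∩ negI I ⊆ (W e')ᶜ ∩ negI I

/-- Weakly monotone. -/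
def WMon : Restriction := fun p I =>
  ∀ s t, s ≤ t → ∀ e ∈ p s, ConsH e (segment I t) → ∀ e' ∈ p t, W e ⊆ W e'

/-- Dual weakly monotone. -/
def WMond : Restriction := fun p I =>
  ∀ s t, s ≤ t → ∀ e ∈ p s, ConsH e (segment I t) → ∀ e' ∈ p t, W e' ⊆ W e

/-- Cautious. -/
def Caut : Restriction := fun p _ =>
  ∀ s t, s < t → ∀ e ∈ p s, ∀ e' ∈ p t, ¬ W e' ⊂ W e

/-- Target cautious. -/
def CautTar : Restriction := fun p I =>
  ∀ s, ∀ e ∈ p s, ¬ posI I ⊂ W e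

/-- Finitely cautious. -/
def CautFin : Restriction := fun p _ =>
  ∀ s t, s < t → ∀ e ∈ p s, ∀ e' ∈ p t, W e' ⊂ W e → (W e').Infinite

/-- Infinitely cautious. -/
def CautInf : Restriction := fun p _ =>
  ∀ s t, s < t → ∀ e ∈ p s, ∀ e' ∈ p t, W e' ⊂ W e → (W e').Finite

/-! ### Learnability -/

/-- The class of admissible learners: all partial computable learners. -/
def AllL : Learner → Prop := fun _ => True
/-- The class of admissible learners: total computable learners (`ℛ`). -/
def TotalL : Learner → Prop := fun h => ∀ x, (h x).Dom
/-- Admissible informants: all informants (`Inf`). -/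
def AllI : Informant → Prop := fun _ => True

/-- `h` learns `L` in the setting given by admissible informants `P`,
interaction operator `β` and local restriction `δ`. -/
def LearnsWith (P : Informant → Prop) (β : InteractionOperator) (δ : Restriction)
    (h : Learner) (L : Set ℕ) : Prop :=
  RE L ∧ ∀ I : Informant, P I → IsInformant I L → δ (β h I) I

/-- `[τ(α) C P β δ]`: the collection of all classes of languages learnable by
some learner in `C` that satisfies the global restriction `α` on all admissible
informants, under interaction operator `β` and local restriction `δ`. -/
def Learnable (α : Restriction) (C : Learner → Prop) (P : Informant → Prop)
    (β : InteractionOperator) (δ : Restriction) : Set (Set (Set ℕ)) :=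
  {𝓛 | ∃ h : Learner, Partrec h ∧ C h ∧
        (∀ I : Informant, IsInf I → P I → α (β h I) I) ∧
        ∀ L ∈ 𝓛, LearnsWith P β δ h L}

/-! ### Properties of restrictions -/

/-- A learning restriction is delayable if it is preserved under postponing
hypotheses along a non-decreasing unbounded function. -/
def Delayable (δ : Restriction) : Prop :=
  ∀ I I' : Informant, IsInf I → IsInf I' → Set.range I = Set.range I' →
    ∀ (p : HypSeq) (s : ℕ → ℕ), Monotone s → (∀ m, ∃ n, m ≤ s n) →
      δ p I → (∀ n, contentS (segment I (s n)) ⊆ contentS (segment I' n)) →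
      δ (fun n => p (s n)) I'

/-- A learning restriction is semantic if it is indifferent to replacing the
hypothesis sequence by a semantically equivalent one. -/
def Semantic (δ : Restriction) : Prop :=
  ∀ (p p' : HypSeq) (I : Informant), δ p I →
    (∀ i, (p i).Dom ↔ (p' i).Dom) →
    (∀ i, ∀ e ∈ p i, ∀ e' ∈ p' i, W e = W e') →
    δ p' I

/-! Hypothesizing exactly the positive data seen so far is strongly monotone, and on a finite
language it becomes correct as soon as all members have appeared.

On the other hand, a learner of `∅` must output a hypothesis for `∅` after finitely many negative
data `(0, false), …, (n - 1, false)`. These data are also consistent with `{n}`, and a dual strongly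
monotone learner can never add `n` afterwards. -/

section Segment

variable {I J : Informant} {n : ℕ}

theorem mem_segment {a : Datum} : a ∈ segment I n ↔ ∃ k < n, I k = a := by
  simp [segment]

theorem segment_congr (h : ∀ k < n, I k = J k) : segment I n = segment J n :=
  List.map_congr_left fun k hk => h k (List.mem_range.1 hk)

theorem monotone_posS_segment (I : Informant) : Monotone fun n => posS (segment I n) := by
  intro m n hmn x hx
  obtain ⟨k, hkm, hk⟩ := mem_segment.1 hx
  exact mem_segment.2 ⟨k, hkm.trans_le hmn, hk⟩

theorem posS_segment_subset_posI : posS (segment I n) ⊆ posI I := by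
  intro x hx
  obtain ⟨k, -, hk⟩ := mem_segment.1 hx
  exact ⟨k, hk⟩

theorem eventually_mem_posS_segment {x : ℕ} (hx : x ∈ posI I) :
    ∀ᶠ n in atTop, x ∈ posS (segment I n) := by
  obtain ⟨k, hk⟩ := hx
  filter_upwards [eventually_gt_atTop k] with n hkn
  exact mem_segment.2 ⟨k, hkn, hk⟩

theorem eventually_posS_segment_eq_posI (hfin : (posI I).Finite) :
    ∀ᶠ n in atTop, posS (segment I n) = posI I := by
  have hall : ∀ᶠ n in atTop, ∀ x ∈ posI I, x ∈ posS (segment I n) :=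
    (eventually_all_finite hfin).2 fun _ => eventually_mem_posS_segment
  exact hall.mono fun _ hn => posS_segment_subset_posI.antisymm hn

end Segment

section CanonicalInformant

/-- The canonical informant of `L`, which presents `0, 1, 2, …` in order, each labelled by
membership in `L`. Canonical informants of languages that agree below `n` share their first
`n` data. -/
noncomputable def canonicalInformant (L : Set ℕ) : Informant := fun x => (x, decide (x ∈ L))

theorem isInformant_canonicalInformant (L : Set ℕ) : IsInformant (canonicalInformant L) L := by
  constructor <;> ext x <;> simp [posI, negI, canonicalInformant]

theorem segment_canonicalInformant_congr {L L' : Set ℕ} {n : ℕ} (h : ∀ k < n, k ∈ L ↔ k ∈ L') :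
    segment (canonicalInformant L) n = segment (canonicalInformant L') n :=
  segment_congr fun k hk => by simp only [canonicalInformant, h k hk]

end CanonicalInformant

section Index

/-- The s-m-n theorem for uniformly r.e. families of sets. -/
theorem exists_computable_W_eq {α : Type*} [Primcodable α] {r : α × ℕ → Prop} (hr : REPred r) :
    ∃ g : ℕ → ℕ, Computable g ∧ ∀ a, W (g (Encodable.encode a)) = {x | r (a, x)} := by
  obtain ⟨c, hc⟩ := Nat.Partrec.Code.exists_code.1 hr
  refine ⟨fun n => Encodable.encode (c.curry n), ?_, fun a => ?_⟩
  · exact Computable.encode.comp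
      (Nat.Partrec.Code.primrec₂_curry.to_comp.comp (Computable.const c) Computable.id)
  · ext x
    simp [W, hc, Part.assert]

theorem primrecPred_mem_posS : PrimrecPred fun q : Seq × ℕ => q.2 ∈ posS q.1 := by
  have hrel : PrimrecRel fun (a : Datum) (x : ℕ) => a = (x, true) :=
    Primrec.eq.comp Primrec.fst (Primrec.pair Primrec.snd (Primrec.const true))
  exact PrimrecPred.of_eq hrel.exists_mem_list fun q => by simp [posS]

theorem exists_computable_W_eq_posS :
    ∃ g : ℕ → ℕ, Computable g ∧ ∀ σ : Seq, W (g (Encodable.encode σ)) = posS σ := by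
  obtain ⟨_, hdec⟩ := primrecPred_mem_posS
  exact exists_computable_W_eq (ComputablePred.to_re ⟨_, hdec.to_comp⟩)

end Index

section StronglyMonotone

variable {I : Informant}

theorem re_posI_of_bc {p : HypSeq} (h : Bc p I) : RE (posI I) := by
  obtain ⟨_, e, -, he⟩ := h.exists
  exact ⟨e, he⟩

theorem sMon_some_of_monotone {e : ℕ → ℕ} (he : Monotone fun n => W (e n)) :
    SMon (fun n => Part.some (e n)) I := by
  intro s t hst a ha b hb
  rw [Part.mem_some_iff.1 ha, Part.mem_some_iff.1 hb]
  exact he hst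

theorem bc_some_of_eventually {e : ℕ → ℕ} (he : ∀ᶠ n in atTop, W (e n) = posI I) :
    Bc (fun n => Part.some (e n)) I :=
  he.mono fun n hn => ⟨e n, Part.mem_some _, hn⟩

theorem finite_mem_learnable_sMon_bc :
    {L : Set ℕ | L.Finite} ∈ Learnable TT AllL AllI Gop (fun p I => SMon p I ∧ Bc p I) := by
  obtain ⟨g, hg, hW⟩ := exists_computable_W_eq_posS
  let h : Learner := fun n => Part.some (g n)
  have sMon_h (I : Informant) : SMon (Gop h I) I :=
    sMon_some_of_monotone <| by simpa only [hW] using monotone_posS_segment I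
  have bc_h {L : Set ℕ} (hL : L.Finite) {I : Informant} (hI : IsInformant I L) : Bc (Gop h I) I :=
    bc_some_of_eventually <| by
      simpa only [hW] using eventually_posS_segment_eq_posI (hI.1 ▸ hL)
  refine ⟨h, hg, trivial, fun _ _ _ => trivial, fun L hL => ⟨?_, ?_⟩⟩
  · have hcan := isInformant_canonicalInformant L
    exact hcan.1 ▸ re_posI_of_bc (bc_h hL hcan)
  · exact fun I _ hI => ⟨sMon_h I, bc_h hL hI⟩

end StronglyMonotone

section DualStronglyMonotone

theorem LearnsWith.exists_forall_subset_of_segment_eq {P : Informant → Prop} {h : Learner}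
    {L : Set ℕ} {I : Informant} (hL : LearnsWith P Gop (fun p I => SMond p I ∧ Bc p I) h L)
    (hPI : P I) (hI : IsInformant I L) :
    ∃ n, ∀ L' J, LearnsWith P Gop (fun p I => SMond p I ∧ Bc p I) h L' → P J → IsInformant J L' →
      segment J n = segment I n → L' ⊆ L := by
  obtain ⟨n, e, he, hWe⟩ := (hL.2 I hPI hI).2.exists
  refine ⟨n, fun L' J hL' hPJ hJ hseg => ?_⟩
  obtain ⟨hmond, hbc⟩ := hL'.2 J hPJ hJ
  obtain ⟨t, ⟨e', he', hWe'⟩, hnt⟩ := (hbc.and (eventually_ge_atTop n)).exists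
  have heJ : e ∈ Gop h J n := by simpa only [Gop, hseg] using he
  calc L' = W e' := by rw [hWe', hJ.1]
    _ ⊆ W e := hmond n t hnt e heJ e' he'
    _ = L := by rw [hWe, hI.1]

theorem notMem_learnable_sMond_bc {α : Restriction} {C : Learner → Prop} {𝓛 : Set (Set ℕ)}
    {L : Set ℕ} (hL : L ∈ 𝓛)
    (happrox : ∀ n, ∃ L' ∈ 𝓛, (∀ k < n, k ∈ L' ↔ k ∈ L) ∧ ¬ L' ⊆ L) :
    𝓛 ∉ Learnable α C AllI Gop (fun p I => SMond p I ∧ Bc p I) := by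
  rintro ⟨h, -, -, -, hlearns⟩
  obtain ⟨n, hn⟩ := (hlearns L hL).exists_forall_subset_of_segment_eq trivial
    (isInformant_canonicalInformant L)
  obtain ⟨L', hL', hagree, hnot⟩ := happrox n
  exact hnot (hn L' _ (hlearns L' hL') trivial (isInformant_canonicalInformant L')
    (segment_canonicalInformant_congr hagree))

theorem finite_notMem_learnable_sMond_bc {α : Restriction} {C : Learner → Prop} :
    {L : Set ℕ | L.Finite} ∉ Learnable α C AllI Gop (fun p I => SMond p I ∧ Bc p I) :=
  notMem_learnable_sMond_bc Set.finite_empty fun n =>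
    ⟨{n}, Set.finite_singleton n, fun k hk => by simp [hk.ne], by simp⟩

end DualStronglyMonotone

/-- The class of all finite languages witnesses
`[Inf G SMon Bc] \ [Inf G SMon^d Bc] ≠ ∅`. -/
theorem smon_minus_dual_smon :
    {L : Set ℕ | L.Finite} ∈
      Learnable TT AllL AllI Gop (fun p I => SMon p I ∧ Bc p I) \
        Learnable TT AllL AllI Gop (fun p I => SMond p I ∧ Bc p I) :=
  ⟨finite_mem_learnable_sMon_bc, finite_notMem_learnable_sMond_bc⟩

end InfBc
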